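/- Let A = (A_1,A_2,A_3,A_4) be a connection on ℝ⁴ (smooth anti-Hermitian matrix-valued maps). Then the anti-self-dual Yang–Mills equations with respect to the split metric dx₁²+dx₂²−dx₃²−dx₄², namely F_{12} = F_{34}, F_{13} = −F_{42}, F_{14} = −F_{23} everywhere, hold if and only if for every μ ∈ ℂ∖{0} the operators ∇_w̄ + μ∇_z and ∇_w + μ⁻¹∇_z̄ commute, i.e. (∇_w̄ + μ∇_z)((∇_w + μ⁻¹∇_z̄)E) = (∇_w + μ⁻¹∇_z̄)((∇_w̄ + μ∇_z)E) for every smooth map E : ℝ⁴ → M_n(ℂ). -/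

import Mathlib

open Matrix Complex
open scoped Matrix ComplexConjugate

attribute [local instance] Matrix.normedAddCommGroup Matrix.normedSpace

noncomputable section

/-- `n × n` complex matrices. -/
abbrev Mat (n : ℕ) := Matrix (Fin n) (Fin n) ℂ

/-- `ℝ⁴` with coordinates `(x₁, x₂, x₃, x₄)`. -/
abbrev P4 : Type := ℝ × ℝ × ℝ × ℝ

/-- Partial derivative in `x₁`. -/
def pd1 {n : ℕ} (f : P4 → Mat n) (p : P4) : Mat n :=
  deriv (fun s => f (s, p.2.1, p.2.2.1, p.2.2.2)) p.1

/-- Partial derivative in `x₂`. -/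
def pd2 {n : ℕ} (f : P4 → Mat n) (p : P4) : Mat n :=
  deriv (fun s => f (p.1, s, p.2.2.1, p.2.2.2)) p.2.1

/-- Partial derivative in `x₃`. -/
def pd3 {n : ℕ} (f : P4 → Mat n) (p : P4) : Mat n :=
  deriv (fun s => f (p.1, p.2.1, s, p.2.2.2)) p.2.2.1

/-- Partial derivative in `x₄`. -/
def pd4 {n : ℕ} (f : P4 → Mat n) (p : P4) : Mat n :=
  deriv (fun s => f (p.1, p.2.1, p.2.2.1, s)) p.2.2.2

/-- Covariant derivative `∇E = ∂E − A·E` in the direction corresponding to `pd`. -/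
def nab {n : ℕ} (pd : (P4 → Mat n) → P4 → Mat n) (A : P4 → Mat n)
    (E : P4 → Mat n) (p : P4) : Mat n :=
  pd E p - A p * E p

/-- Curvature component `F_{ij} = −∂_{x_i}A_j + ∂_{x_j}A_i + [A_i, A_j]`. -/
def curv {n : ℕ} (pdi pdj : (P4 → Mat n) → P4 → Mat n) (Ai Aj : P4 → Mat n)
    (p : P4) : Mat n :=
  -(pdi Aj p) + pdj Ai p + (Ai p * Aj p - Aj p * Ai p)

/-- `∇_z = ½(∇₁ − i∇₂)`. -/
def nabz {n : ℕ} (A1 A2 E : P4 → Mat n) (p : P4) : Mat n :=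
  (2⁻¹ : ℂ) • (nab pd1 A1 E p - Complex.I • nab pd2 A2 E p)

/-- `∇_z̄ = ½(∇₁ + i∇₂)`. -/
def nabzbar {n : ℕ} (A1 A2 E : P4 → Mat n) (p : P4) : Mat n :=
  (2⁻¹ : ℂ) • (nab pd1 A1 E p + Complex.I • nab pd2 A2 E p)

/-- `∇_w = ½(∇₃ − i∇₄)`. -/
def nabw {n : ℕ} (A3 A4 E : P4 → Mat n) (p : P4) : Mat n :=
  (2⁻¹ : ℂ) • (nab pd3 A3 E p - Complex.I • nab pd4 A4 E p)

/-- `∇_w̄ = ½(∇₃ + i∇₄)`. -/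
def nabwbar {n : ℕ} (A3 A4 E : P4 → Mat n) (p : P4) : Mat n :=
  (2⁻¹ : ℂ) • (nab pd3 A3 E p + Complex.I • nab pd4 A4 E p)

/-- The operator `∇_w̄ + μ∇_z`. -/
def DOne {n : ℕ} (A1 A2 A3 A4 : P4 → Mat n) (μ : ℂ) (E : P4 → Mat n) : P4 → Mat n :=
  fun p => nabwbar A3 A4 E p + μ • nabz A1 A2 E p

/-- The operator `∇_w + μ⁻¹∇_z̄` (split signature). -/
def DTwoSplit {n : ℕ} (A1 A2 A3 A4 : P4 → Mat n) (μ : ℂ) (E : P4 → Mat n) : P4 → Mat n :=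
  fun p => nabw A3 A4 E p + μ⁻¹ • nabzbar A1 A2 E p

/-- directional derivative -/
def dd {n : ℕ} (v : P4) (f : P4 → Mat n) (p : P4) : Mat n := fderiv ℝ f p v

/-- bilinear multiplication -/
def mulB (n : ℕ) : Mat n →L[ℝ] Mat n →L[ℝ] Mat n :=
  LinearMap.toContinuousLinearMap
    ((LinearMap.toContinuousLinearMap : (Mat n →ₗ[ℝ] Mat n) ≃ₗ[ℝ] _).toLinearMap ∘ₗ
      LinearMap.mul ℝ (Mat n))

lemma mulB_apply {n : ℕ} (X Y : Mat n) : mulB n X Y = X * Y := rfl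

abbrev Sm {n : ℕ} (f : P4 → Mat n) : Prop := ContDiff ℝ (⊤ : ℕ∞) f

lemma Sm.da {n : ℕ} {f : P4 → Mat n} (h : Sm f) (p : P4) : DifferentiableAt ℝ f p :=
  h.differentiable (by simp) p

lemma bil_smooth {X E F G : Type*} [NormedAddCommGroup X] [NormedSpace ℝ X]
    [NormedAddCommGroup E] [NormedSpace ℝ E] [NormedAddCommGroup F] [NormedSpace ℝ F]
    [NormedAddCommGroup G] [NormedSpace ℝ G] (B : E →L[ℝ] F →L[ℝ] G) {f : X → E} {g : X → F}
    (hf : ContDiff ℝ (⊤ : ℕ∞) f) (hg : ContDiff ℝ (⊤ : ℕ∞) g) :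
    ContDiff ℝ (⊤ : ℕ∞) (fun p => B (f p) (g p)) :=
  (B.contDiff.comp hf).clm_apply hg

lemma Sm.mul {n : ℕ} {f g : P4 → Mat n} (hf : Sm f) (hg : Sm g) : Sm (fun p => f p * g p) :=
  bil_smooth (mulB n) hf hg

lemma Sm.dd {n : ℕ} {f : P4 → Mat n} (hf : Sm f) (v : P4) : Sm (dd v f) :=
  (hf.fderiv_right (m := ((⊤ : ℕ∞) : WithTop ℕ∞)) (by simp)).clm_apply contDiff_const

lemma dd_mul {n : ℕ} {f g : P4 → Mat n} (hf : Sm f) (hg : Sm g) (v p : P4) :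
    dd v (fun p => f p * g p) p = dd v f p * g p + f p * dd v g p := by
  have := (mulB n).hasFDerivAt_of_bilinear (hf.da p).hasFDerivAt (hg.da p).hasFDerivAt
  have h2 : dd v (fun p => f p * g p) p = _ := congrArg (fun L => L v) this.fderiv
  rw [h2, add_comm]
  rfl

lemma dd_comm {n : ℕ} {f : P4 → Mat n} (hf : Sm f) (v w p : P4) :
    dd v (dd w f) p = dd w (dd v f) p := by
  have hs : IsSymmSndFDerivAt ℝ f p := hf.contDiffAt.isSymmSndFDerivAt (by
    rw [minSmoothness_of_isRCLikeNormedField]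
    exact WithTop.coe_le_coe.2 (le_top : (2 : ℕ∞) ≤ ⊤))
  have h1 : DifferentiableAt ℝ (fderiv ℝ f) p :=
    (hf.fderiv_right (m := ((⊤ : ℕ∞) : WithTop ℕ∞)) (by simp)).differentiable (by simp) p
  have key : ∀ a b : P4, dd a (dd b f) p = fderiv ℝ (fderiv ℝ f) p a b := by
    intro a b
    have := (h1.hasFDerivAt.clm_apply (hasFDerivAt_const b p)).fderiv
    have h2 : dd a (dd b f) p = _ := congrArg (fun L => L a) this
    rw [h2]
    have h3 : fderiv ℝ f p (0 : P4) = 0 := map_zero _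
    exact (congrArg (fun X => X + fderiv ℝ (fderiv ℝ f) p a b) h3).trans (zero_add _)
  rw [key, key]; exact hs v w

lemma nab_add {n : ℕ} {f g B : P4 → Mat n} (hf : Sm f) (hg : Sm g) (v p : P4) :
    nab (dd v) B (fun q => f q + g q) p = nab (dd v) B f p + nab (dd v) B g p := by
  have h : dd v (fun q => f q + g q) p = dd v f p + dd v g p :=
    congrArg (fun L => L v) ((hf.da p).hasFDerivAt.add (hg.da p).hasFDerivAt).fderiv
  simp only [nab, h, mul_add]; abel

lemma nab_smul {n : ℕ} {f B : P4 → Mat n} (hf : Sm f) (c : ℂ) (v p : P4) :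
    nab (dd v) B (fun q => c • f q) p = c • nab (dd v) B f p := by
  have h : dd v (fun q => c • f q) p = c • dd v f p :=
    congrArg (fun L => L v) ((hf.da p).hasFDerivAt.const_smul c).fderiv
  simp only [nab, h, smul_sub, mul_smul_comm]

lemma Sm.nab {n : ℕ} {f B : P4 → Mat n} (hf : Sm f) (hB : Sm B) (v : P4) :
    Sm (nab (_root_.dd v) B f) := (hf.dd v).sub (hB.mul hf)

lemma nab_comm {n : ℕ} {E A B : P4 → Mat n} (hE : Sm E) (hA : Sm A) (hB : Sm B) (v w p : P4) :
    nab (dd v) A (nab (dd w) B E) p =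
      nab (dd w) B (nab (dd v) A E) p + curv (dd v) (dd w) A B p * E p := by
  have key : ∀ (a b : P4) {C : P4 → Mat n}, Sm C → dd a (nab (dd b) C E) p =
      dd a (dd b E) p - (dd a C p * E p + C p * dd a E p) := by
    intro a b C hC
    rw [← dd_mul hC hE]
    simp only [dd]
    exact congrArg (fun L => L a) (fderiv_fun_sub ((hE.dd b).da p) ((hC.mul hE).da p))
  have e1 : nab (dd v) A (nab (dd w) B E) p =
    dd v (nab (dd w) B E) p - A p * (dd w E p - B p * E p) := rfl
  have e2 : nab (dd w) B (nab (dd v) A E) p =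
    dd w (nab (dd v) A E) p - B p * (dd v E p - A p * E p) := rfl
  rw [e1, e2, key v w hB, key w v hA, dd_comm hE v w, curv]
  noncomm_ring

def e1 : P4 := (1, 0, 0, 0)
def e2 : P4 := (0, 1, 0, 0)
def e3 : P4 := (0, 0, 1, 0)
def e4 : P4 := (0, 0, 0, 1)

lemma pd1_eq {n : ℕ} {f : P4 → Mat n} (hf : Sm f) : pd1 f = dd e1 f := by
  funext p
  have hg : HasDerivAt (fun s : ℝ => ((s, p.2.1, p.2.2.1, p.2.2.2) : P4)) e1 p.1 :=
    (hasDerivAt_id _).prodMk ((hasDerivAt_const _ _).prodMk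
      ((hasDerivAt_const _ _).prodMk (hasDerivAt_const _ _)))
  exact (HasFDerivAt.comp_hasDerivAt (f := fun s : ℝ => ((s, p.2.1, p.2.2.1, p.2.2.2) : P4))
    p.1 (hf.da p).hasFDerivAt hg).deriv

lemma pd2_eq {n : ℕ} {f : P4 → Mat n} (hf : Sm f) : pd2 f = dd e2 f := by
  funext p
  have hg : HasDerivAt (fun s : ℝ => ((p.1, s, p.2.2.1, p.2.2.2) : P4)) e2 p.2.1 :=
    (hasDerivAt_const _ _).prodMk ((hasDerivAt_id _).prodMk
      ((hasDerivAt_const _ _).prodMk (hasDerivAt_const _ _)))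
  exact (HasFDerivAt.comp_hasDerivAt (f := fun s : ℝ => ((p.1, s, p.2.2.1, p.2.2.2) : P4))
    p.2.1 (hf.da p).hasFDerivAt hg).deriv

lemma pd3_eq {n : ℕ} {f : P4 → Mat n} (hf : Sm f) : pd3 f = dd e3 f := by
  funext p
  have hg : HasDerivAt (fun s : ℝ => ((p.1, p.2.1, s, p.2.2.2) : P4)) e3 p.2.2.1 :=
    (hasDerivAt_const _ _).prodMk ((hasDerivAt_const _ _).prodMk
      ((hasDerivAt_id _).prodMk (hasDerivAt_const _ _)))
  exact (HasFDerivAt.comp_hasDerivAt (f := fun s : ℝ => ((p.1, p.2.1, s, p.2.2.2) : P4))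
    p.2.2.1 (hf.da p).hasFDerivAt hg).deriv

lemma pd4_eq {n : ℕ} {f : P4 → Mat n} (hf : Sm f) : pd4 f = dd e4 f := by
  funext p
  have hg : HasDerivAt (fun s : ℝ => ((p.1, p.2.1, p.2.2.1, s) : P4)) e4 p.2.2.2 :=
    (hasDerivAt_const _ _).prodMk ((hasDerivAt_const _ _).prodMk
      ((hasDerivAt_const _ _).prodMk (hasDerivAt_id _)))
  exact (HasFDerivAt.comp_hasDerivAt (f := fun s : ℝ => ((p.1, p.2.1, p.2.2.1, s) : P4))
    p.2.2.2 (hf.da p).hasFDerivAt hg).deriv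

/-- general first order operator -/
def L4 {n : ℕ} (A1 A2 A3 A4 : P4 → Mat n) (a b c d : ℂ) (E : P4 → Mat n) : P4 → Mat n :=
  fun p => (a • nab (dd e1) A1 E p + b • nab (dd e2) A2 E p) +
    (c • nab (dd e3) A3 E p + d • nab (dd e4) A4 E p)

lemma Sm.csmul {n : ℕ} {f : P4 → Mat n} (hf : Sm f) (c : ℂ) : Sm (fun p => c • f p) :=
  ContDiff.const_smul c hf

lemma Sm.L4 {n : ℕ} {A1 A2 A3 A4 E : P4 → Mat n} (h1 : Sm A1) (h2 : Sm A2) (h3 : Sm A3)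
    (h4 : Sm A4) (hE : Sm E) (a b c d : ℂ) : Sm (L4 A1 A2 A3 A4 a b c d E) :=
  (((hE.nab h1 e1).csmul a).add ((hE.nab h2 e2).csmul b)).add
    (((hE.nab h3 e3).csmul c).add ((hE.nab h4 e4).csmul d))

lemma nab_L4 {n : ℕ} {A1 A2 A3 A4 E : P4 → Mat n} (h1 : Sm A1) (h2 : Sm A2) (h3 : Sm A3)
    (h4 : Sm A4) (hE : Sm E) (a b c d : ℂ) (B : P4 → Mat n) (v p : P4) :
    nab (dd v) B (L4 A1 A2 A3 A4 a b c d E) p =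
      (a • nab (dd v) B (nab (dd e1) A1 E) p + b • nab (dd v) B (nab (dd e2) A2 E) p) +
      (c • nab (dd v) B (nab (dd e3) A3 E) p + d • nab (dd v) B (nab (dd e4) A4 E) p) := by
  have s1 := hE.nab h1 e1
  have s2 := hE.nab h2 e2
  have s3 := hE.nab h3 e3
  have s4 := hE.nab h4 e4
  unfold L4
  rw [nab_add ((s1.csmul a).add (s2.csmul b)) ((s3.csmul c).add (s4.csmul d)),
    nab_add (s1.csmul a) (s2.csmul b), nab_add (s3.csmul c) (s4.csmul d),
    nab_smul s1, nab_smul s2, nab_smul s3, nab_smul s4]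

lemma DOne_eq {n : ℕ} {A1 A2 A3 A4 E : P4 → Mat n} (hE : Sm E) (μ : ℂ) :
    DOne A1 A2 A3 A4 μ E = L4 A1 A2 A3 A4 (2⁻¹ * μ) (-(2⁻¹ * μ * I)) 2⁻¹ (2⁻¹ * I) E := by
  funext p
  simp only [DOne, L4, nabwbar, nabz, nab, pd1_eq hE, pd2_eq hE, pd3_eq hE, pd4_eq hE]
  module

lemma DTwo_eq {n : ℕ} {A1 A2 A3 A4 E : P4 → Mat n} (hE : Sm E) (μ : ℂ) :
    DTwoSplit A1 A2 A3 A4 μ E =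
      L4 A1 A2 A3 A4 (2⁻¹ * μ⁻¹) (2⁻¹ * μ⁻¹ * I) 2⁻¹ (-(2⁻¹ * I)) E := by
  funext p
  simp only [DTwoSplit, L4, nabw, nabzbar, nab, pd1_eq hE, pd2_eq hE, pd3_eq hE, pd4_eq hE]
  module

lemma L4_comm {n : ℕ} {A1 A2 A3 A4 E : P4 → Mat n} (h1 : Sm A1) (h2 : Sm A2) (h3 : Sm A3)
    (h4 : Sm A4) (hE : Sm E) (a b c d a' b' c' d' : ℂ) (p : P4) :
    L4 A1 A2 A3 A4 a b c d (L4 A1 A2 A3 A4 a' b' c' d' E) p =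
    L4 A1 A2 A3 A4 a' b' c' d' (L4 A1 A2 A3 A4 a b c d E) p +
    ((a * b' - b * a') • curv pd1 pd2 A1 A2 p + (a * c' - c * a') • curv pd1 pd3 A1 A3 p
     + (a * d' - d * a') • curv pd1 pd4 A1 A4 p + (b * c' - c * b') • curv pd2 pd3 A2 A3 p
     + (d * b' - b * d') • curv pd4 pd2 A4 A2 p
     + (c * d' - d * c') • curv pd3 pd4 A3 A4 p) * E p := by
  have u : ∀ (a b c d : ℂ) (G : P4 → Mat n), L4 A1 A2 A3 A4 a b c d G p =
    (a • nab (dd e1) A1 G p + b • nab (dd e2) A2 G p) +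
    (c • nab (dd e3) A3 G p + d • nab (dd e4) A4 G p) := fun _ _ _ _ _ => rfl
  rw [u a, u a']
  simp only [nab_L4 h1 h2 h3 h4 hE]
  rw [nab_comm hE h1 h2 e1 e2, nab_comm hE h1 h3 e1 e3, nab_comm hE h1 h4 e1 e4,
    nab_comm hE h2 h3 e2 e3, nab_comm hE h4 h2 e4 e2, nab_comm hE h3 h4 e3 e4]
  simp only [add_mul, smul_mul_assoc]
  have c12 : curv pd1 pd2 A1 A2 p = curv (dd e1) (dd e2) A1 A2 p := by
    simp only [curv, pd1_eq h2, pd2_eq h1]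
  have c13 : curv pd1 pd3 A1 A3 p = curv (dd e1) (dd e3) A1 A3 p := by
    simp only [curv, pd1_eq h3, pd3_eq h1]
  have c14 : curv pd1 pd4 A1 A4 p = curv (dd e1) (dd e4) A1 A4 p := by
    simp only [curv, pd1_eq h4, pd4_eq h1]
  have c23 : curv pd2 pd3 A2 A3 p = curv (dd e2) (dd e3) A2 A3 p := by
    simp only [curv, pd2_eq h3, pd3_eq h2]
  have c42 : curv pd4 pd2 A4 A2 p = curv (dd e4) (dd e2) A4 A2 p := by
    simp only [curv, pd4_eq h2, pd2_eq h4]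
  have c34 : curv pd3 pd4 A3 A4 p = curv (dd e3) (dd e4) A3 A4 p := by
    simp only [curv, pd3_eq h4, pd4_eq h3]
  rw [c12, c13, c14, c23, c42, c34]
  module

lemma D_comm {n : ℕ} {A1 A2 A3 A4 E : P4 → Mat n} (h1 : Sm A1) (h2 : Sm A2) (h3 : Sm A3)
    (h4 : Sm A4) (hE : Sm E) (μ : ℂ) (hμ : μ ≠ 0) (p : P4) :
    DOne A1 A2 A3 A4 μ (DTwoSplit A1 A2 A3 A4 μ E) p =
    DTwoSplit A1 A2 A3 A4 μ (DOne A1 A2 A3 A4 μ E) p +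
    ((2⁻¹ * I) • (curv pd1 pd2 A1 A2 p - curv pd3 pd4 A3 A4 p)
      + (4⁻¹ * (μ - μ⁻¹)) • (curv pd1 pd3 A1 A3 p + curv pd4 pd2 A4 A2 p)
      - (4⁻¹ * I * (μ + μ⁻¹)) • (curv pd1 pd4 A1 A4 p + curv pd2 pd3 A2 A3 p)) * E p := by
  rw [DTwo_eq hE, DOne_eq (Sm.L4 h1 h2 h3 h4 hE _ _ _ _), DOne_eq hE,
    DTwo_eq (Sm.L4 h1 h2 h3 h4 hE _ _ _ _), L4_comm h1 h2 h3 h4 hE]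
  congr 2
  have hI : I * I = -1 := I_mul_I
  match_scalars <;> field_simp <;> ring_nf <;> simp <;> ring_nf

/-- The anti-self-dual Yang–Mills equations on `ℝ^{2,2}`,
`F₁₂ = F₃₄`, `F₁₃ = −F₄₂`, `F₁₄ = −F₂₃`, hold iff for every `μ ∈ ℂ∖{0}` the operators
`∇_w̄ + μ∇_z` and `∇_w + μ⁻¹∇_z̄` commute on all smooth maps `E : ℝ⁴ → Mₙ(ℂ)`. -/
theorem asdym_split_lax {n : ℕ} (A1 A2 A3 A4 : P4 → Mat n)
    (h1s : ContDiff ℝ (⊤ : ℕ∞) A1) (h2s : ContDiff ℝ (⊤ : ℕ∞) A2)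
    (h3s : ContDiff ℝ (⊤ : ℕ∞) A3) (h4s : ContDiff ℝ (⊤ : ℕ∞) A4)
    (h1a : ∀ p : P4, (A1 p)ᴴ = -(A1 p)) (h2a : ∀ p : P4, (A2 p)ᴴ = -(A2 p))
    (h3a : ∀ p : P4, (A3 p)ᴴ = -(A3 p)) (h4a : ∀ p : P4, (A4 p)ᴴ = -(A4 p)) :
    (∀ p : P4,
        curv pd1 pd2 A1 A2 p = curv pd3 pd4 A3 A4 p ∧
        curv pd1 pd3 A1 A3 p = -(curv pd4 pd2 A4 A2 p) ∧
        curv pd1 pd4 A1 A4 p = -(curv pd2 pd3 A2 A3 p)) ↔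
      (∀ μ : ℂ, μ ≠ 0 → ∀ E : P4 → Mat n, ContDiff ℝ (⊤ : ℕ∞) E → ∀ p : P4,
        DOne A1 A2 A3 A4 μ (DTwoSplit A1 A2 A3 A4 μ E) p =
          DTwoSplit A1 A2 A3 A4 μ (DOne A1 A2 A3 A4 μ E) p) := by
  constructor
  · intro h μ hμ E hE p
    obtain ⟨a, b, c⟩ := h p
    rw [D_comm h1s h2s h3s h4s hE μ hμ p, a, b, c]
    simp
  · intro h p
    have key : ∀ μ : ℂ, μ ≠ 0 →
      (2⁻¹ * I) • (curv pd1 pd2 A1 A2 p - curv pd3 pd4 A3 A4 p)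
      + (4⁻¹ * (μ - μ⁻¹)) • (curv pd1 pd3 A1 A3 p + curv pd4 pd2 A4 A2 p)
      - (4⁻¹ * I * (μ + μ⁻¹)) • (curv pd1 pd4 A1 A4 p + curv pd2 pd3 A2 A3 p) = 0 := by
      intro μ hμ
      have h0 := h μ hμ (fun _ => 1) contDiff_const p
      rw [D_comm h1s h2s h3s h4s contDiff_const μ hμ p, add_eq_left, mul_one] at h0
      exact h0
    generalize curv pd1 pd2 A1 A2 p = F12 at *
    generalize curv pd3 pd4 A3 A4 p = F34 at *
    generalize curv pd1 pd3 A1 A3 p = F13 at *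
    generalize curv pd4 pd2 A4 A2 p = F42 at *
    generalize curv pd1 pd4 A1 A4 p = F14 at *
    generalize curv pd2 pd3 A2 A3 p = F23 at *
    have k1 := key 1 one_ne_zero
    have k2 := key (-1) (by simp)
    have k3 := key I I_ne_zero
    rw [inv_one] at k1
    rw [inv_neg_one] at k2
    rw [inv_I] at k3
    have x : F12 - F34 = 0 := by
      have : (I : ℂ) • (F12 - F34) = 0 := by
        linear_combination (norm := module) k1 + k2
      exact (smul_eq_zero.mp this).resolve_left I_ne_zero
    have y : F14 + F23 = 0 := by
      rw [x] at k1
      have : (I : ℂ) • (F14 + F23) = 0 := by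
        linear_combination (norm := module) (-2 : ℂ) • k1
      exact (smul_eq_zero.mp this).resolve_left I_ne_zero
    have z : F13 + F42 = 0 := by
      rw [x, y] at k3
      have : (I : ℂ) • (F13 + F42) = 0 := by
        linear_combination (norm := module) (2 : ℂ) • k3
      exact (smul_eq_zero.mp this).resolve_left I_ne_zero
    exact ⟨sub_eq_zero.mp x, eq_neg_of_add_eq_zero_left z, eq_neg_of_add_eq_zero_left y⟩
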